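/- arXiv:2207.04610 — 2 statements merged into one kernel-verified Lean document; each statement's English description precedes it below -/
import Mathlib

section
/- Let r be a positive integer and a₁, a₂, a₃, a₄, e integers with gcd(a₄,e·mod structure) = gcd(e,r), gcd(a_i, r) = 1 for i = 1,2,3, gcd(e,r) > 1, and suppose that for every integer j with 1 ≤ j ≤ r-1 one has {j a₁/r} + {j a₂/r} + {j a₃/r} + {j a₄/r} = {j e/r} + j/r + 1. Then a₄ ≡ e (mod r), and there exist indices i, j, k with {i,j,k} = {1,2,3} such that a_i ≡ 1 (mod r) and a_j + a_k ≡ 0 (mod r). -/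
open Filter Topology in
lemma tl_bound_aux {δ t u v s : ℝ} (hδ : 0 < δ) (hδ1 : δ ≤ 1) (ht : 1 ≤ t) (hu : δ * t ≤ u)
    (huv : u ≤ v) (huv1 : v - u ≤ 1) (hs1 : 1 ≤ s) (hs2 : s ≤ 2) :
    |1 / u ^ s - 1 / v ^ s| ≤ 2 * (δ ^ 3)⁻¹ * (t ^ 2)⁻¹ := by
  have hδt : 0 < δ * t := by positivity
  have hu0 : 0 < u := lt_of_lt_of_le hδt hu
  have hv0 : 0 < v := lt_of_lt_of_le hu0 huv
  have h1 : (u / v) ^ (2:ℝ) ≤ (u / v) ^ s :=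
    Real.rpow_le_rpow_of_exponent_ge (by positivity) ((div_le_one hv0).2 huv) hs2
  rw [Real.rpow_two] at h1
  have h2 : 1 / u ^ s - 1 / v ^ s = (u ^ s)⁻¹ * (1 - (u / v) ^ s) := by
    rw [Real.div_rpow hu0.le hv0.le]
    have := Real.rpow_pos_of_pos hu0 s
    have := Real.rpow_pos_of_pos hv0 s
    field_simp
  have h3 : (u / v) ^ s ≤ 1 :=
    Real.rpow_le_one (by positivity) ((div_le_one hv0).2 huv) (by linarith)
  have h4 : 1 - (u / v) ^ s ≤ 2 * (δ * t)⁻¹ := by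
    have : 1 - (u / v) ^ 2 ≤ 2 * u⁻¹ := by
      have e : 1 - (u / v) ^ 2 = (1 - u / v) * (1 + u / v) := by ring
      have a1 : 1 - u / v ≤ u⁻¹ := by
        have : 1 - u / v = (v - u) / v := by field_simp
        rw [this, ← one_div]
        exact div_le_div₀ zero_le_one huv1 hu0 huv
      have a2 : 1 + u / v ≤ 2 := by linarith [(div_le_one hv0).2 huv]
      have a3 : 0 ≤ u / v := by positivity
      rw [e, mul_comm 2]
      exact mul_le_mul a1 a2 (by linarith) (by positivity)
    have : u⁻¹ ≤ (δ * t)⁻¹ := inv_anti₀ hδt hu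
    linarith
  have h5 : (u ^ s)⁻¹ ≤ (δ ^ 2)⁻¹ * t⁻¹ := by
    rw [← mul_inv]
    apply inv_anti₀ (by positivity)
    calc δ ^ 2 * t ≤ δ ^ s * t ^ s := by
          gcongr
          · rw [← Real.rpow_two]
            exact Real.rpow_le_rpow_of_exponent_ge hδ hδ1 hs2
          · exact Real.self_le_rpow_of_one_le ht hs1
      _ = (δ * t) ^ s := by rw [Real.mul_rpow hδ.le (by linarith)]
      _ ≤ u ^ s := Real.rpow_le_rpow hδt.le hu (by linarith)
  have h6 : 0 ≤ (u ^ s)⁻¹ := by positivity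
  rw [h2, abs_of_nonneg (mul_nonneg h6 (by linarith))]
  calc _ ≤ ((δ ^ 2)⁻¹ * t⁻¹) * (2 * (δ * t)⁻¹) :=
        mul_le_mul h5 h4 (by linarith) (by positivity)
    _ = _ := by field_simp

lemma tl_bound {δ t u v s : ℝ} (hδ : 0 < δ) (hδ1 : δ ≤ 1) (ht : 1 ≤ t) (hu : δ * t ≤ u)
    (hv : δ * t ≤ v) (huv1 : |v - u| ≤ 1) (hs1 : 1 ≤ s) (hs2 : s ≤ 2) :
    |1 / u ^ s - 1 / v ^ s| ≤ 2 * (δ ^ 3)⁻¹ * (t ^ 2)⁻¹ := by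
  rw [abs_le] at huv1
  rcases le_total u v with h | h
  · exact tl_bound_aux hδ hδ1 ht hu h (by linarith) hs1 hs2
  · rw [abs_sub_comm]
    exact tl_bound_aux hδ hδ1 ht hv h (by linarith) hs1 hs2

open Filter Topology HurwitzZeta in
lemma tl_hurwitzZetaOdd_one {a : ℝ} (ha0 : 0 < a) (ha1 : a < 1) :
    hurwitzZetaOdd (a : UnitAddCircle) 1 = (Real.pi / 2) * Complex.cot (Real.pi * a) := by
  set f : ℝ → ℕ → ℝ := fun s n => (1 / ((n : ℝ) + a) ^ s - 1 / ((n : ℝ) + 1 - a) ^ s) / 2 with hf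
  set δ := min a (1 - a) with hδd
  have hδ : 0 < δ := lt_min ha0 (by linarith)
  have hδa : δ ≤ a := min_le_left _ _
  have hδb : δ ≤ 1 - a := min_le_right _ _
  have hbd : ∀ s : ℝ, 1 ≤ s → s ≤ 2 → ∀ n : ℕ,
      ‖f s n‖ ≤ (δ ^ 3)⁻¹ * (((n : ℝ) + 1) ^ 2)⁻¹ := by
    intro s hs1 hs2 n
    have hn : (0 : ℝ) ≤ n := n.cast_nonneg
    have := tl_bound (δ := δ) (t := (n : ℝ) + 1) (u := (n : ℝ) + a) (v := (n : ℝ) + 1 - a) (s := s)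
      hδ (by linarith) (by linarith) (by nlinarith) (by nlinarith)
      (by rw [abs_le]; constructor <;> linarith) hs1 hs2
    rw [Real.norm_eq_abs, hf]
    simp only
    rw [abs_div, abs_two]
    linarith
  have hsum : Summable (fun n : ℕ => (δ ^ 3)⁻¹ * (((n : ℝ) + 1) ^ 2)⁻¹) := by
    apply Summable.mul_left
    have := (summable_nat_add_iff 1).2 (Real.summable_nat_pow_inv.2 (by norm_num : 1 < 2))
    simpa using this
  have hlim : Tendsto (fun s : ℝ => ∑' n, f s n) (𝓝[>] 1) (𝓝 (∑' n, f 1 n)) := by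
    refine tendsto_tsum_of_dominated_convergence hsum ?_ ?_
    · intro n
      refine Tendsto.mono_left ?_ nhdsWithin_le_nhds
      have h1 : (n : ℝ) + a ≠ 0 := by positivity
      have h2 : (n : ℝ) + 1 - a ≠ 0 := by
        have : (0 : ℝ) ≤ n := n.cast_nonneg
        linarith
      have h1' : ((n : ℝ) + a) ^ (1:ℝ) ≠ 0 := by simpa using h1
      have h2' : ((n : ℝ) + 1 - a) ^ (1:ℝ) ≠ 0 := by simpa using h2
      have c1 := (Real.continuousAt_const_rpow (b := 1) h1)
      have c2 := (Real.continuousAt_const_rpow (b := 1) h2)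
      exact (((continuousAt_const.div c1 h1').sub (continuousAt_const.div c2 h2')).div_const 2)
    · have : Set.Ioo (1:ℝ) 2 ∈ 𝓝[>] (1:ℝ) := Ioo_mem_nhdsGT (by norm_num)
      filter_upwards [this] with s hs n
      exact hbd s hs.1.le hs.2.le n
  have heq : ∀ s : ℝ, 1 < s → hurwitzZetaOdd (a : UnitAddCircle) s = ((∑' n, f s n : ℝ) : ℂ) := by
    intro s hs
    have := hasSum_nat_hurwitzZetaOdd_of_mem_Icc (a := a) ⟨ha0.le, ha1.le⟩ (s := (s : ℂ)) (by simpa)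
    rw [← this.tsum_eq, Complex.ofReal_tsum]
    congr 1
    ext n
    have h1 : 0 ≤ (n : ℝ) + a := by positivity
    have h2 : 0 ≤ (n : ℝ) + 1 - a := by
      have : (0 : ℝ) ≤ n := n.cast_nonneg
      linarith
    simp only [hf]
    push_cast [Complex.ofReal_cpow h1, Complex.ofReal_cpow h2]
    rfl
  have hL : Tendsto (fun s : ℝ => hurwitzZetaOdd (a : UnitAddCircle) s) (𝓝[>] 1)
      (𝓝 (hurwitzZetaOdd (a : UnitAddCircle) 1)) := by
    have h := ((differentiable_hurwitzZetaOdd (a : UnitAddCircle)).continuous.comp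
      Complex.continuous_ofReal).tendsto 1
    simp only [Function.comp_def, Complex.ofReal_one] at h
    exact h.mono_left nhdsWithin_le_nhds
  have hR : Tendsto (fun s : ℝ => hurwitzZetaOdd (a : UnitAddCircle) s) (𝓝[>] 1)
      (𝓝 ((∑' n, f 1 n : ℝ) : ℂ)) := by
    refine ((Complex.continuous_ofReal.tendsto _).comp hlim).congr' ?_
    filter_upwards [self_mem_nhdsWithin] with s hs
    simp [heq s hs]
  rw [tendsto_nhds_unique hL hR]
  -- evaluate
  have hs1 : Summable (f 1) := Summable.of_norm_bounded hsum (hbd 1 le_rfl (by norm_num))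
  have hT := (Complex.continuous_ofReal.tendsto _).comp hs1.hasSum.tendsto_sum_nat
  have hz : (a : ℂ) ∈ Complex.integerComplement := by
    rintro ⟨n, hn⟩
    have : (n : ℝ) = a := by exact_mod_cast hn
    rw [← this] at ha0 ha1
    norm_cast at ha0 ha1
    omega
  have hC := tendsto_logDeriv_euler_cot_sub hz
  have hC2 : Tendsto (fun M : ℕ => (1 / (a : ℂ) + ∑ j ∈ Finset.range M, cotTerm (a : ℂ) j
      - ((1 / ((M : ℝ) + a) : ℝ) : ℂ)) / 2) atTop
      (𝓝 ((1 / (a : ℂ) + (Real.pi * Complex.cot (Real.pi * a) - 1 / (a : ℂ)) - ((0 : ℝ) : ℂ)) / 2)) := by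
    refine ((tendsto_const_nhds.add hC).sub ?_).div_const 2
    refine (Complex.continuous_ofReal.tendsto _).comp ?_
    refine tendsto_const_nhds.div_atTop ?_
    exact tendsto_atTop_add_const_right _ _ tendsto_natCast_atTop_atTop
  have hfin : ∀ M : ℕ, ((∑ n ∈ Finset.range M, f 1 n : ℝ) : ℂ) =
      (1 / (a : ℂ) + ∑ j ∈ Finset.range M, cotTerm (a : ℂ) j
      - ((1 / ((M : ℝ) + a) : ℝ) : ℂ)) / 2 := by
    intro M
    induction M with
    | zero => simp
    | succ M ih =>
      rw [Finset.sum_range_succ, Finset.sum_range_succ, Complex.ofReal_add, ih]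
      simp only [hf, cotTerm, Real.rpow_one]
      have e : (a : ℂ) - (M + 1) = -((M : ℂ) + 1 - a) := by ring
      rw [e, one_div (-((M : ℂ) + 1 - a)), inv_neg]
      push_cast
      rw [show (M : ℂ) + 1 + a = a + (M + 1) by ring]
      ring
  have := tendsto_nhds_unique hT (hC2.congr fun M => (hfin M).symm)
  rw [this]
  simp
  ring

/-- The (rescaled) sawtooth function on `ZMod N`. -/
noncomputable def tlS (N : ℕ) (x : ZMod N) : ℂ := (x.val : ℂ) - ((-x).val : ℂ)

lemma tlS_neg {N : ℕ} (x : ZMod N) : tlS N (-x) = -tlS N x := by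
  simp [tlS]

lemma tl_geom (w : ℂ) (n : ℕ) :
    (w - 1) * ∑ i ∈ Finset.range n, (i : ℂ) * w ^ i =
      n * w ^ n - w * ∑ i ∈ Finset.range n, w ^ i := by
  induction n with
  | zero => simp
  | succ n ih =>
    rw [Finset.sum_range_succ, Finset.sum_range_succ, mul_add, ih]
    push_cast
    ring

lemma tl_sum_val {N : ℕ} [NeZero N] (w : ℂ) (hw : w ≠ 1) (hwN : w ^ N = 1) :
    ∑ x : ZMod N, (x.val : ℂ) * w ^ x.val = N / (w - 1) := by
  have h1 : ∑ x : ZMod N, (x.val : ℂ) * w ^ x.val = ∑ i ∈ Finset.range N, (i : ℂ) * w ^ i := by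
    refine Finset.sum_bij (fun x _ => x.val) ?_ ?_ ?_ ?_
    · intro x _; simpa using ZMod.val_lt x
    · intro x _ y _ h; exact ZMod.val_injective N h
    · intro i hi
      exact ⟨(i : ZMod N), Finset.mem_univ _, ZMod.val_cast_of_lt (by simpa using hi)⟩
    · intro x _; rfl
  have h2 := tl_geom w N
  have h3 : ∑ i ∈ Finset.range N, w ^ i = 0 := by
    have := geom_sum_mul w N
    rw [hwN, sub_self] at this
    exact (mul_eq_zero.1 this).resolve_right (sub_ne_zero.2 hw)
  rw [h3, hwN] at h2
  rw [h1, eq_div_iff (sub_ne_zero.2 hw)]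
  linear_combination h2

open ZMod HurwitzZeta in
lemma tl_dft_S {N : ℕ} [NeZero N] (k : ZMod N) :
    ZMod.dft (tlS N) k = (2 * Complex.I * N / Real.pi) * hurwitzZetaOdd (toAddCircle k) 1 := by
  by_cases hk : k = 0
  · subst hk
    have h0 : hurwitzZetaOdd (0 : UnitAddCircle) 1 = 0 := by
      have := hurwitzZetaOdd_neg 0 1
      rw [neg_zero] at this
      exact self_eq_neg.1 this
    rw [ZMod.dft_apply_zero, map_zero, h0, mul_zero]
    simp only [tlS, Finset.sum_sub_distrib]
    rw [sub_eq_zero]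
    exact (Equiv.sum_comp (Equiv.neg (ZMod N)) (fun x => (x.val : ℂ))).symm
  set w : ℂ := stdAddChar (-k) with hw
  have hpow : ∀ x : ZMod N, stdAddChar (-(x * k)) = w ^ x.val := by
    intro x
    rw [hw, ← AddChar.map_nsmul_eq_pow, nsmul_eq_mul, natCast_zmod_val]
    congr 1; ring
  have hw1 : w ≠ 1 := by
    intro h
    rw [hw, ← (stdAddChar (N := N)).map_zero_eq_one] at h
    exact hk (neg_eq_zero.1 (injective_stdAddChar h))
  have hwN : w ^ N = 1 := by
    rw [hw, ← AddChar.map_nsmul_eq_pow, nsmul_eq_mul, CharP.cast_eq_zero, zero_mul,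
      AddChar.map_zero_eq_one]
  have hw0 : w ≠ 0 := by
    intro h; rw [h, zero_pow (NeZero.ne N)] at hwN; exact zero_ne_one hwN
  have hA : ∑ x : ZMod N, stdAddChar (-(x * k)) * (x.val : ℂ) = N / (w - 1) := by
    rw [← tl_sum_val w hw1 hwN]
    exact Finset.sum_congr rfl fun x _ => by rw [hpow, mul_comm]
  have hB : ∑ x : ZMod N, stdAddChar (-(x * k)) * ((-x).val : ℂ) = N / (w⁻¹ - 1) := by
    rw [← tl_sum_val w⁻¹ (by simpa using hw1) (by rw [inv_pow, hwN, inv_one])]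
    rw [← Equiv.sum_comp (Equiv.neg (ZMod N))]
    refine Finset.sum_congr rfl fun x _ => ?_
    simp only [Equiv.neg_apply, neg_neg]
    rw [mul_comm, inv_pow, ← hpow, AddChar.map_neg_eq_inv, neg_mul]
  have hF : ZMod.dft (tlS N) k = N / (w - 1) - N / (w⁻¹ - 1) := by
    rw [ZMod.dft_apply, ← hA, ← hB, ← Finset.sum_sub_distrib]
    exact Finset.sum_congr rfl fun x _ => by simp only [tlS, smul_eq_mul]; ring
  have hkv : 0 < k.val := by
    rw [Nat.pos_iff_ne_zero, Ne, ZMod.val_eq_zero]; exact hk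
  have hN : (0 : ℝ) < N := by exact_mod_cast NeZero.pos N
  have hH : hurwitzZetaOdd (toAddCircle k) 1 =
      (Real.pi / 2) * Complex.cot (Real.pi * ((k.val / N : ℝ) : ℂ)) := by
    rw [toAddCircle_apply]
    apply tl_hurwitzZetaOdd_one
    · have : (0 : ℝ) < k.val := by exact_mod_cast hkv
      positivity
    · rw [div_lt_one hN]
      exact_mod_cast ZMod.val_lt k
  have hexp : Complex.exp (2 * Real.pi * Complex.I * ((k.val / N : ℝ) : ℂ)) = w⁻¹ := by
    rw [hw, ← AddChar.map_neg_eq_inv, neg_neg]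
    conv_rhs => rw [← natCast_zmod_val k]
    have := stdAddChar_coe (N := N) (k.val : ℤ)
    simp only [Int.cast_natCast] at this
    rw [this]
    push_cast
    congr 1; ring
  rw [hF, hH, Complex.cot_pi_eq_exp_ratio, hexp]
  have hpi : (Real.pi : ℂ) ≠ 0 := by exact_mod_cast Real.pi_ne_zero
  have e1 : w - 1 ≠ 0 := sub_ne_zero.2 hw1
  have e2 : 1 - w ≠ 0 := sub_ne_zero.2 (Ne.symm hw1)
  have e3 : w⁻¹ - 1 = (1 - w) / w := by field_simp
  have e4 : 1 - w⁻¹ = (w - 1) / w := by field_simp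
  have e5 : w⁻¹ + 1 = (1 + w) / w := by field_simp
  have e6 : 1 - w = -(w - 1) := by ring
  rw [e3, e4, e5, e6]
  have := Complex.I_ne_zero
  field_simp
  ring

open ZMod HurwitzZeta in
/-- The key vanishing: transforms of relations between sawtooth functions. -/
lemma tl_key {N : ℕ} [NeZero N] (g : ZMod N → ℂ)
    (h : ∀ j : ZMod N, ∑ x, g x * tlS N (x * j) = 0) (j : ZMod N) :
    ∑ k, ZMod.dft g (j * k) * hurwitzZetaOdd (toAddCircle k) 1 = 0 := by
  have hN : (N : ℂ) ≠ 0 := by exact_mod_cast NeZero.ne N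
  have hpi : (Real.pi : ℂ) ≠ 0 := by exact_mod_cast Real.pi_ne_zero
  have hc : (2 * Complex.I * N / Real.pi : ℂ) ≠ 0 := by
    exact div_ne_zero (mul_ne_zero (mul_ne_zero two_ne_zero Complex.I_ne_zero) hN) hpi
  have h1 : ∀ k : ZMod N, hurwitzZetaOdd (toAddCircle k) 1 =
      (2 * Complex.I * N / Real.pi : ℂ)⁻¹ * ZMod.dft (tlS N) k := by
    intro k; rw [tl_dft_S, inv_mul_cancel_left₀ hc]
  have h2 : ∀ y : ZMod N, ∑ k, stdAddChar (-(k * y)) * ZMod.dft (tlS N) k = - (N * tlS N y) := by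
    intro y
    have := congr_fun (ZMod.dft_dft (tlS N)) y
    rw [ZMod.dft_apply] at this
    simp only [smul_eq_mul, tlS_neg] at this
    rw [this]; ring
  have h3 : ∑ k, ZMod.dft g (j * k) * ZMod.dft (tlS N) k = 0 := by
    calc ∑ k, ZMod.dft g (j * k) * ZMod.dft (tlS N) k
        = ∑ k, ∑ x, g x * (stdAddChar (-(k * (x * j))) * ZMod.dft (tlS N) k) := by
          refine Finset.sum_congr rfl fun k _ => ?_
          rw [ZMod.dft_apply g, Finset.sum_mul]
          refine Finset.sum_congr rfl fun x _ => ?_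
          rw [show x * (j * k) = k * (x * j) by ring, smul_eq_mul]
          ring
      _ = ∑ x, g x * (- (N * tlS N (x * j))) := by
          rw [Finset.sum_comm]
          refine Finset.sum_congr rfl fun x _ => ?_
          rw [← Finset.mul_sum, h2]
      _ = - N * ∑ x, g x * tlS N (x * j) := by
          rw [Finset.mul_sum]
          exact Finset.sum_congr rfl fun x _ => by ring
      _ = 0 := by rw [h j, mul_zero]
  simp only [h1]
  rw [← mul_zero (2 * Complex.I * N / Real.pi : ℂ)⁻¹, ← h3, Finset.mul_sum]
  exact Finset.sum_congr rfl fun x _ => by ring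

open ZMod HurwitzZeta in
lemma tl_units {N : ℕ} [NeZero N] (G : ZMod N → ℂ) (hodd : ∀ x, G (-x) = - G x)
    (hG : ∀ x, ¬ IsUnit x → G x = 0)
    (h : ∀ j : ZMod N, ∑ k, G (j * k) * hurwitzZetaOdd (toAddCircle k) 1 = 0) : G = 0 := by
  have hA : ∀ χ : DirichletCharacter ℂ N, ∑ j, χ j * G j = 0 := by
    intro χ
    rcases χ.even_or_odd with hχ | hχ
    · have : ∑ j, χ j * G j = - ∑ j, χ j * G j := by
        conv_lhs => rw [← Equiv.sum_comp (Equiv.neg (ZMod N))]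
        rw [← Finset.sum_neg_distrib]
        refine Finset.sum_congr rfl fun x _ => ?_
        rw [Equiv.neg_apply, hodd, hχ.to_fun x, mul_neg]
      exact self_eq_neg.1 this
    · have hinv : DirichletCharacter.Odd χ⁻¹ := by
        unfold DirichletCharacter.Odd at *
        rw [MulChar.inv_apply_eq_inv', hχ]; norm_num
      have hne : χ⁻¹ ≠ 1 := by
        intro h1
        unfold DirichletCharacter.Odd at hinv
        rw [h1, MulChar.one_apply (isUnit_one.neg)] at hinv
        norm_num at hinv
      have hL := DirichletCharacter.LFunction_apply_one_ne_zero hne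
      rw [DirichletCharacter.LFunction, LFunction_def_odd hinv.to_fun] at hL
      have hL' := right_ne_zero_of_mul hL
      have hk : ∀ k : ZMod N, ∑ j, χ j * G (j * k) = χ⁻¹ k * ∑ j, χ j * G j := by
        intro k
        by_cases hu : IsUnit k
        · obtain ⟨u, rfl⟩ := hu
          rw [Finset.mul_sum, ← Equiv.sum_comp u.mulRight (fun j => χ⁻¹ (u : ZMod N) * (χ j * G j))]
          refine Finset.sum_congr rfl fun j _ => ?_
          have : χ⁻¹ (u : ZMod N) * χ (u : ZMod N) = 1 := by
            rw [← MulChar.mul_apply, inv_mul_cancel, MulChar.one_apply_coe]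
          simp only [Units.mulRight_apply, map_mul]
          linear_combination (- χ j * G (j * u)) * this
        · rw [MulChar.map_nonunit _ hu, zero_mul]
          refine Finset.sum_eq_zero fun j _ => ?_
          rw [hG _ (fun hh => hu (isUnit_of_mul_isUnit_right hh)), mul_zero]
      have h0 : (∑ j, χ j * G j) * ∑ k, χ⁻¹ k * hurwitzZetaOdd (toAddCircle k) 1 = 0 := by
        calc _ = ∑ k, (∑ j, χ j * G (j * k)) * hurwitzZetaOdd (toAddCircle k) 1 := by
              rw [Finset.mul_sum]
              exact Finset.sum_congr rfl fun k _ => by rw [hk]; ring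
          _ = ∑ j, χ j * ∑ k, G (j * k) * hurwitzZetaOdd (toAddCircle k) 1 := by
              simp only [Finset.sum_mul, Finset.mul_sum]
              rw [Finset.sum_comm]
              exact Finset.sum_congr rfl fun j _ => Finset.sum_congr rfl fun k _ => by ring
          _ = 0 := by simp [h]
      exact (mul_eq_zero.1 h0).resolve_right hL'
  funext b
  by_cases hb : IsUnit b
  · have h1 : ∑ χ : DirichletCharacter ℂ N, χ b⁻¹ * ∑ j, χ j * G j = 0 := by simp [hA]
    have h2 : ∑ χ : DirichletCharacter ℂ N, χ b⁻¹ * ∑ j, χ j * G j = N.totient * G b := by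
      calc _ = ∑ j, (∑ χ : DirichletCharacter ℂ N, χ b⁻¹ * χ j) * G j := by
            simp only [Finset.sum_mul, Finset.mul_sum]
            rw [Finset.sum_comm]
            exact Finset.sum_congr rfl fun j _ => Finset.sum_congr rfl fun k _ => by ring
        _ = _ := by
            simp only [DirichletCharacter.sum_char_inv_mul_char_eq ℂ hb]
            simp
    rw [h1] at h2
    have : (N.totient : ℂ) ≠ 0 := by
      exact_mod_cast (Nat.totient_pos.2 (NeZero.pos N)).ne'
    exact (mul_eq_zero.1 h2.symm).resolve_left this
  · exact hG b hb

lemma tlS_scale {m d N : ℕ} [NeZero N] [NeZero d] (hN : N = m * d) (i : ℤ) :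
    tlS N ((m * i : ℤ) : ZMod N) = m * tlS d (i : ZMod d) := by
  have key : ∀ i : ℤ, ((((m * i : ℤ) : ZMod N).val : ℕ) : ℂ) = m * (((i : ZMod d).val : ℕ) : ℂ) := by
    intro i
    have h1 := ZMod.val_intCast (n := N) (m * i)
    have h2 := ZMod.val_intCast (n := d) i
    rw [hN] at h1
    push_cast at h1
    rw [Int.mul_emod_mul_of_pos _ _ (by
      have := NeZero.ne N
      have : m ≠ 0 := by rintro rfl; simp at hN; omega
      omega), ← h2] at h1
    subst hN
    push_cast
    exact_mod_cast h1
  unfold tlS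
  rw [← Int.cast_neg, ← Int.cast_neg, ← mul_neg, key, key]
  ring

lemma tl_char_scale {m d N : ℕ} [NeZero N] [NeZero d] (hN : N = m * d) (i : ℤ) :
    ZMod.stdAddChar ((m * i : ℤ) : ZMod N) = ZMod.stdAddChar (i : ZMod d) := by
  rw [ZMod.stdAddChar_coe, ZMod.stdAddChar_coe]
  have h0 : (N : ℂ) ≠ 0 := by exact_mod_cast NeZero.ne N
  subst hN
  push_cast at *
  congr 1
  have := left_ne_zero_of_mul h0
  have := right_ne_zero_of_mul h0
  field_simp

/-- Linear independence of the sawtooth functions. -/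
theorem tl_indep (N : ℕ) : ∀ [NeZero N] (g : ZMod N → ℂ), (∀ x, g (-x) = - g x) →
    (∀ j : ZMod N, ∑ x, g x * tlS N (x * j) = 0) → g = 0 := by
  induction N using Nat.strong_induction_on with
  | _ N ih =>
  intro _ g hodd h
  suffices hG : ZMod.dft g = 0 by
    exact (LinearEquiv.map_eq_zero_iff _).1 hG
  apply tl_units
  · exact ZMod.dft_odd_iff.2 hodd
  · intro k hk
    set m := Nat.gcd k.val N with hm
    obtain ⟨d, hd⟩ : m ∣ N := Nat.gcd_dvd_right _ _
    obtain ⟨l, hl⟩ : m ∣ k.val := Nat.gcd_dvd_left _ _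
    have hN0 := NeZero.pos N
    have hd0 : d ≠ 0 := by rintro rfl; omega
    have hm0 : m ≠ 0 := by intro h0; rw [h0] at hd; omega
    have hm1 : m ≠ 1 := by
      intro h1
      apply hk
      rw [← ZMod.natCast_zmod_val k, ZMod.isUnit_iff_coprime]
      exact h1
    have hdN : d < N := by
      rw [hd]
      have : 2 ≤ m := by omega
      nlinarith [Nat.pos_of_ne_zero hd0]
    have : NeZero d := ⟨hd0⟩
    set c : ZMod N → ZMod d := fun x => ((x.val : ℤ) : ZMod d) with hc
    have hdvd : d ∣ N := ⟨m, by rw [hd]; ring⟩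
    have hcast : ∀ x : ZMod N, c x = ZMod.castHom hdvd (ZMod d) x := by
      intro x
      rw [hc]
      conv_rhs => rw [← ZMod.natCast_zmod_val x, map_natCast]
      simp
    set g' : ZMod d → ℂ := fun b => ∑ x, if c x = b then g x else 0 with hg'
    have hpush : ∀ F : ZMod d → ℂ, ∑ b, g' b * F b = ∑ x, g x * F (c x) := by
      intro F
      simp only [hg', Finset.sum_mul]
      rw [Finset.sum_comm]
      refine Finset.sum_congr rfl fun x _ => ?_
      simp
    have hg0 : g' = 0 := by
      apply ih d hdN
      · intro b
        simp only [hg']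
        rw [← Equiv.sum_comp (Equiv.neg (ZMod N)), ← Finset.sum_neg_distrib]
        refine Finset.sum_congr rfl fun x _ => ?_
        simp only [Equiv.neg_apply, hcast, map_neg, neg_inj, hodd]
        split_ifs <;> simp
      · intro j
        rw [hpush (fun b => tlS d (b * j))]
        have := h ((m * (j.val : ℤ) : ℤ) : ZMod N)
        have hmc : (m : ℂ) ≠ 0 := by exact_mod_cast hm0
        apply mul_left_cancel₀ hmc
        rw [mul_zero, ← this, Finset.mul_sum]
        refine Finset.sum_congr rfl fun x _ => ?_
        have e1 : c x * j = (((x.val : ℤ) * (j.val : ℤ) : ℤ) : ZMod d) := by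
          simp [hc]
        have e2 : x * ((m * (j.val : ℤ) : ℤ) : ZMod N) =
            ((m * ((x.val : ℤ) * (j.val : ℤ)) : ℤ) : ZMod N) := by
          push_cast
          rw [ZMod.natCast_zmod_val]
          ring
        rw [e1, e2, tlS_scale hd]
        ring
    have hfin := hpush (fun b => ZMod.stdAddChar (-(b * (l : ZMod d))))
    rw [hg0] at hfin
    simp only [Pi.zero_apply, zero_mul, Finset.sum_const_zero] at hfin
    rw [ZMod.dft_apply, hfin]
    refine Finset.sum_congr rfl fun x _ => ?_
    have e1 : -(c x * (l : ZMod d)) = ((-((x.val : ℤ) * (l : ℤ)) : ℤ) : ZMod d) := by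
      simp [hc]
    have e2 : -(x * k) = ((m * (-((x.val : ℤ) * (l : ℤ))) : ℤ) : ZMod N) := by
      conv_lhs => rw [← ZMod.natCast_zmod_val k, hl, ← ZMod.natCast_zmod_val x]
      push_cast
      ring
    rw [e1, e2, tl_char_scale hd, smul_eq_mul, mul_comm]
  · exact tl_key g h

lemma tl_fract (r : ℕ) [NeZero r] (j : ℕ) (a : ℤ) :
    Int.fract ((j : ℚ) * (a : ℚ) / (r : ℚ)) =
      ((((j : ZMod r) * (a : ZMod r)).val : ℕ) : ℚ) / r := by
  have h := Int.fract_div_intCast_eq_div_intCast_mod (k := ℚ) (m := (j : ℤ) * a) (n := r)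
  have h2 := ZMod.val_intCast (n := r) ((j : ℤ) * a)
  push_cast at h h2
  rw [h, ← h2]
  push_cast
  rfl

/-- Antisymmetrised delta function. -/
noncomputable def tlD {N : ℕ} (a x : ZMod N) : ℂ :=
  (if x = a then 1 else 0) - (if x = -a then 1 else 0)

lemma tlD_neg {N : ℕ} (a x : ZMod N) : tlD a (-x) = - tlD a x := by
  simp only [tlD, neg_eq_iff_eq_neg (a := x), neg_neg, neg_sub]

lemma tlD_sum {N : ℕ} [NeZero N] (a j : ZMod N) :
    ∑ x, tlD a x * tlS N (x * j) = 2 * tlS N (a * j) := by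
  simp only [tlD, sub_mul, Finset.sum_sub_distrib, ite_mul, one_mul, zero_mul,
    Finset.sum_ite_eq', Finset.mem_univ, if_true, neg_mul, tlS_neg]
  ring

lemma tl_rel {r : ℕ} [NeZero r] (a₁ a₂ a₃ a₄ e : ℤ)
    (hsum : ∀ j : ℕ, 1 ≤ j → j ≤ r - 1 →
      Int.fract ((j : ℚ) * (a₁ : ℚ) / (r : ℚ)) + Int.fract ((j : ℚ) * (a₂ : ℚ) / (r : ℚ)) +
      Int.fract ((j : ℚ) * (a₃ : ℚ) / (r : ℚ)) + Int.fract ((j : ℚ) * (a₄ : ℚ) / (r : ℚ)) =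
      Int.fract ((j : ℚ) * (e : ℚ) / (r : ℚ)) + (j : ℚ) / (r : ℚ) + 1) (x : ZMod r) :
    tlD (a₁ : ZMod r) x + tlD (a₂ : ZMod r) x + tlD (a₃ : ZMod r) x + tlD (a₄ : ZMod r) x
      = tlD (e : ZMod r) x + tlD 1 x := by
  have hr : (r : ℚ) ≠ 0 := by exact_mod_cast NeZero.ne r
  have h1 : ∀ t : ZMod r, t ≠ 0 →
      (((t * a₁).val : ℕ) : ℂ) + (t * a₂).val + (t * a₃).val + (t * a₄).val
        = (t * e).val + t.val + r := by
    intro t ht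
    have ht0 : t.val ≠ 0 := by rwa [Ne, ZMod.val_eq_zero]
    have ht1 := ZMod.val_lt t
    have := hsum t.val (by omega) (by omega)
    simp only [tl_fract, ZMod.natCast_zmod_val] at this
    field_simp at this
    exact_mod_cast this
  have h2 : ∀ t : ZMod r,
      tlS r (a₁ * t) + tlS r (a₂ * t) + tlS r (a₃ * t) + tlS r (a₄ * t)
        = tlS r (e * t) + tlS r (1 * t) := by
    intro t
    by_cases ht : t = 0
    · simp [ht, tlS]
    · have p := h1 t ht
      have q := h1 (-t) (neg_ne_zero.2 ht)
      simp only [neg_mul] at q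
      simp only [tlS, mul_comm _ t, mul_one]
      linear_combination p - q
  have h3 := tl_indep r (fun x => tlD (a₁ : ZMod r) x + tlD (a₂ : ZMod r) x + tlD (a₃ : ZMod r) x
      + tlD (a₄ : ZMod r) x - tlD (e : ZMod r) x - tlD 1 x) (by
        intro x; simp only [tlD_neg]; ring) (by
        intro j
        simp only [sub_mul, add_mul, Finset.sum_sub_distrib, Finset.sum_add_distrib, tlD_sum]
        linear_combination 2 * h2 j)
  have h4 := congr_fun h3 x
  simp only [Pi.zero_apply] at h4
  linear_combination h4

lemma tl_unit_part {r : ℕ} (h2 : (1 : ZMod r) ≠ -1) (A B C : ZMod r)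
    (hB : IsUnit B) (hA1 : A = 1)
    (h : ∀ x : ZMod r, IsUnit x → tlD A x + tlD B x + tlD C x = tlD 1 x) : B + C = 0 := by
  have hBB : B ≠ -B := by
    intro hh
    apply h2
    obtain ⟨u, rfl⟩ := hB
    have := congr_arg (fun z => (↑u⁻¹ : ZMod r) * z) hh
    simpa using this
  have hv := h B hB
  rw [hA1] at hv
  by_contra hne
  have hBC : B ≠ -C := fun hh => hne (by rw [hh]; ring)
  have hv' : tlD B B + tlD C B = 0 := by linear_combination hv
  simp only [tlD, if_true, if_neg hBB, if_neg hBC] at hv'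
  split_ifs at hv' <;> norm_num at hv'

/-- Terminal lemma, case gcd(e,r) > 1. -/
theorem stmt_6 (r : ℕ) (hr : 0 < r) (a₁ a₂ a₃ a₄ e : ℤ)
    (h₁ : Int.gcd a₁ r = 1) (h₂ : Int.gcd a₂ r = 1) (h₃ : Int.gcd a₃ r = 1)
    (h₄ : Int.gcd a₄ r = Int.gcd e r) (he : 1 < Int.gcd e r)
    (hsum : ∀ j : ℕ, 1 ≤ j → j ≤ r - 1 →
      Int.fract ((j : ℚ) * (a₁ : ℚ) / (r : ℚ)) + Int.fract ((j : ℚ) * (a₂ : ℚ) / (r : ℚ)) +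
      Int.fract ((j : ℚ) * (a₃ : ℚ) / (r : ℚ)) + Int.fract ((j : ℚ) * (a₄ : ℚ) / (r : ℚ)) =
      Int.fract ((j : ℚ) * (e : ℚ) / (r : ℚ)) + (j : ℚ) / (r : ℚ) + 1) :
    a₄ ≡ e [ZMOD (r : ℤ)] ∧
    ∃ i j k : Fin 3, ({i, j, k} : Finset (Fin 3)) = Finset.univ ∧
      (![a₁, a₂, a₃] i) ≡ 1 [ZMOD (r : ℤ)] ∧
      (![a₁, a₂, a₃] j) + (![a₁, a₂, a₃] k) ≡ 0 [ZMOD (r : ℤ)] := by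
  have : NeZero r := ⟨hr.ne'⟩
  have hrel := tl_rel a₁ a₂ a₃ a₄ e hsum
  have hun : ∀ a : ℤ, IsUnit (a : ZMod r) ↔ Int.gcd a r = 1 := by
    intro a
    rw [ZMod.coe_int_isUnit_iff_isCoprime, isCoprime_comm, Int.isCoprime_iff_gcd_eq_one]
  have u1 := (hun a₁).2 h₁
  have u2 := (hun a₂).2 h₂
  have u3 := (hun a₃).2 h₃
  have u4 : ¬ IsUnit (a₄ : ZMod r) := fun h => by have := (hun a₄).1 h; omega
  have ue : ¬ IsUnit (e : ZMod r) := fun h => by have := (hun e).1 h; omega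
  have hzero : ∀ {a x : ZMod r}, (IsUnit a ↔ ¬ IsUnit x) → tlD a x = 0 := by
    intro a x hax
    have n1 : x ≠ a := by rintro rfl; tauto
    have n2 : x ≠ -a := by rintro rfl; rw [IsUnit.neg_iff] at hax; tauto
    simp [tlD, n1, n2]
  have hunit : ∀ x : ZMod r, IsUnit x → tlD (a₁ : ZMod r) x + tlD (a₂ : ZMod r) x
      + tlD (a₃ : ZMod r) x = tlD 1 x := by
    intro x hx
    have := hrel x
    rw [hzero (a := (a₄ : ZMod r)) (by tauto), hzero (a := (e : ZMod r)) (by tauto)] at this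
    linear_combination this
  have hnon : ∀ x : ZMod r, ¬ IsUnit x → tlD (a₄ : ZMod r) x = tlD (e : ZMod r) x := by
    intro x hx
    have := hrel x
    rw [hzero (a := (a₁ : ZMod r)) (by tauto), hzero (a := (a₂ : ZMod r)) (by tauto),
      hzero (a := (a₃ : ZMod r)) (by tauto),
      hzero (a := (1 : ZMod r)) (by simp [hx])] at this
    linear_combination this
  have hiff : ∀ a b : ℤ, a ≡ b [ZMOD (r : ℤ)] ↔ (a : ZMod r) = (b : ZMod r) := by
    intro a b; exact (ZMod.intCast_eq_intCast_iff a b r).symm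
  constructor
  · by_cases hee : (e : ZMod r) = -(e : ZMod r)
    · -- both are 2-torsion
      have h4 : (a₄ : ZMod r) = -(a₄ : ZMod r) := by
        by_contra hne
        have := hnon _ u4
        simp only [tlD, if_true, if_neg hne, ← hee, sub_self] at this
        norm_num at this
      have key : ∀ a : ℤ, (a : ZMod r) = -(a : ZMod r) → (r : ℤ) ∣ 2 * a := by
        intro a ha
        rw [← ZMod.intCast_zmod_eq_zero_iff_dvd]
        push_cast
        linear_combination ha
      obtain ⟨p, hp⟩ := key _ hee
      obtain ⟨q, hq⟩ := key _ h4
      have hpq : 2 * (a₄ - e) = r * (q - p) := by linear_combination hq - hp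
      have hd : (r : ℤ) ∣ e ↔ (r : ℤ) ∣ a₄ := by
        rw [← Int.gcd_eq_right_iff_dvd (by positivity), ← Int.gcd_eq_right_iff_dvd (by positivity),
          h₄]
      have par : ∀ (a p : ℤ), 2 * a = r * p → ((r : ℤ) ∣ a ↔ Even p) := by
        intro a p h
        constructor
        · rintro ⟨c, rfl⟩
          have : (r : ℤ) * p = r * (2 * c) := by linear_combination -h
          have := mul_left_cancel₀ (by positivity : (r : ℤ) ≠ 0) this
          exact ⟨c, by omega⟩
        · rintro ⟨c, rfl⟩
          exact ⟨c, by linarith⟩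
      have : Even (q - p) := by
        rw [Int.even_sub, ← par _ _ hq, ← par _ _ hp]; exact hd.symm
      exact (Int.modEq_iff_dvd.2 ((par _ _ hpq).2 this)).symm
    · rw [hiff]
      have := hnon _ ue
      simp only [tlD, if_true, if_neg hee] at this
      by_contra hne
      rw [if_neg (Ne.symm hne)] at this
      split_ifs at this <;> norm_num at this
  · by_cases h2 : (1 : ZMod r) = -1
    · -- r = 2
      have hr2 : (r : ℤ) ∣ 2 := by
        rw [← ZMod.intCast_zmod_eq_zero_iff_dvd]
        push_cast
        linear_combination h2
      have hrle : r ∣ 2 := by exact_mod_cast hr2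
      have hr1 : r ≠ 1 := by rintro rfl; simp at he
      have : r = 2 := ((Nat.dvd_prime Nat.prime_two).1 hrle).resolve_left hr1
      subst this
      have odd : ∀ a : ℤ, Int.gcd a (2 : ℕ) = 1 → a % 2 = 1 := by
        intro a ha
        by_contra hne
        have : (2 : ℤ) ∣ a := by omega
        have := Int.dvd_coe_gcd this (by norm_num : (2 : ℤ) ∣ (2 : ℕ))
        rw [ha] at this
        norm_num at this
      have := odd _ h₁
      have := odd _ h₂
      have := odd _ h₃
      refine ⟨0, 1, 2, by decide, ?_, ?_⟩
      · simp [Int.ModEq]; omega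
      · simp [Int.ModEq]; omega
    · have hex : (a₁ : ZMod r) = 1 ∨ (a₂ : ZMod r) = 1 ∨ (a₃ : ZMod r) = 1 := by
        by_contra hcon
        push Not at hcon
        obtain ⟨n1, n2, n3⟩ := hcon
        have := hunit 1 isUnit_one
        simp only [tlD, if_neg n1.symm, if_neg n2.symm, if_neg n3.symm, if_neg h2, if_true] at this
        split_ifs at this <;> norm_num at this
      rcases hex with h | h | h
      · refine ⟨0, 1, 2, by decide, ?_, ?_⟩
        · rw [hiff]; simpa using h
        · rw [hiff]
          simpa using tl_unit_part h2 _ _ _ u2 h hunit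
      · refine ⟨1, 0, 2, by decide, ?_, ?_⟩
        · rw [hiff]; simpa using h
        · rw [hiff]
          simpa using tl_unit_part h2 _ _ _ u1 h
            (fun x hx => by rw [← hunit x hx]; ring)
      · refine ⟨2, 0, 1, by decide, ?_, ?_⟩
        · rw [hiff]; simpa using h
        · rw [hiff]
          simpa using tl_unit_part h2 _ _ _ u1 h
            (fun x hx => by rw [← hunit x hx]; ring)
end

section
/- Let r be a positive integer and a₁, a₂, a₃, a₄, e integers with gcd(a_i, r) = 1 for i = 1,2,3, gcd(a₄,r) = gcd(e,r) = 1, and suppose that for every integer j with 1 ≤ j ≤ r-1 one has {j a₁/r} + {j a₂/r} + {j a₃/r} + {j a₄/r} = {j e/r} + j/r + 1. Set a₅ := -e and a₆ := -1. Then there is a partition of {1,...,6} into three pairs {i₁,i₂}, {i₃,i₄}, {i₅,i₆} such that a_{i₁}+a_{i₂} ≡ a_{i₃}+a_{i₄} ≡ a_{i₅}+a_{i₆} ≡ 0 (mod r). -/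
open Filter Topology

lemma T7_aux_le {a b s m : ℝ} (hm : 0 < m) (hma : m ≤ a) (hab : a ≤ b) (hb : b - a ≤ 1)
    (hs1 : 1 ≤ s) (hs2 : s ≤ 2) :
    |(a ^ s)⁻¹ - (b ^ s)⁻¹| ≤ 2 * ((m ^ 2)⁻¹ + (m ^ 3)⁻¹) := by
  have ha : 0 < a := hm.trans_le hma
  have hb0 : 0 < b := ha.trans_le hab
  have has : 0 < a ^ s := Real.rpow_pos_of_pos ha s
  have hbs : 0 < b ^ s := Real.rpow_pos_of_pos hb0 s
  have h1 : (b ^ s)⁻¹ ≤ (a ^ s)⁻¹ := by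
    gcongr
  rw [abs_of_nonneg (by linarith)]
  have hq : (a / b) ^ (2:ℝ) ≤ (a / b) ^ s :=
    Real.rpow_le_rpow_of_exponent_ge (by positivity) ((div_le_one hb0).2 hab) hs2
  have e1 : (a ^ s)⁻¹ - (b ^ s)⁻¹ = (a ^ s)⁻¹ * (1 - (a / b) ^ s) := by
    rw [Real.div_rpow ha.le hb0.le]; field_simp
  have h2 : (1 - (a / b) ^ s) ≤ 2 / m := by
    have : 1 - (a / b) ^ (2:ℝ) ≤ 2 / b := by
      rw [Real.rpow_two, div_pow, le_div_iff₀ hb0]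
      have : (1 - a ^ 2 / b ^ 2) * b = (b - a) * ((b + a) / b) := by field_simp; ring
      rw [this]
      have h3 : (b + a) / b ≤ 2 := by rw [div_le_iff₀ hb0]; linarith
      have h4 : 0 ≤ (b + a) / b := by positivity
      nlinarith
    have h5 : 2 / b ≤ 2 / m := by gcongr; linarith
    linarith
  have h3 : (a ^ s)⁻¹ ≤ m⁻¹ + (m ^ 2)⁻¹ := by
    have hms : (a ^ s)⁻¹ ≤ (m ^ s)⁻¹ := by gcongr
    refine hms.trans ?_
    rcases le_total m 1 with h | h
    · have : m ^ (2:ℝ) ≤ m ^ s := Real.rpow_le_rpow_of_exponent_ge hm h hs2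
      rw [Real.rpow_two] at this
      have : (m ^ s)⁻¹ ≤ (m ^ 2)⁻¹ := by gcongr
      have : 0 < m⁻¹ := by positivity
      linarith
    · have : m ^ (1:ℝ) ≤ m ^ s := Real.rpow_le_rpow_of_exponent_le h hs1
      rw [Real.rpow_one] at this
      have : (m ^ s)⁻¹ ≤ m⁻¹ := by gcongr
      have : 0 < (m ^ 2)⁻¹ := by positivity
      linarith
  rw [e1]
  calc (a ^ s)⁻¹ * (1 - (a / b) ^ s) ≤ (a ^ s)⁻¹ * (2 / m) := by gcongr
    _ ≤ (m⁻¹ + (m ^ 2)⁻¹) * (2 / m) := by gcongr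
    _ = _ := by field_simp

lemma T7_aux {a b s m : ℝ} (hm : 0 < m) (hma : m ≤ a) (hmb : m ≤ b) (hb : |b - a| ≤ 1)
    (hs1 : 1 ≤ s) (hs2 : s ≤ 2) :
    |(a ^ s)⁻¹ - (b ^ s)⁻¹| ≤ 2 * ((m ^ 2)⁻¹ + (m ^ 3)⁻¹) := by
  rw [abs_le] at hb
  rcases le_total a b with h | h
  · exact T7_aux_le hm hma h hb.2 hs1 hs2
  · rw [abs_sub_comm]
    exact T7_aux_le hm hmb h (by linarith) hs1 hs2

lemma T7_summable {c : ℝ} (hc : 0 < c) :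
    Summable fun n : ℕ => 2 * ((((n:ℝ) + c) ^ 2)⁻¹ + (((n:ℝ) + c) ^ 3)⁻¹) := by
  refine Summable.mul_left _ (Summable.add ?_ ?_)
  · refine ((Real.summable_one_div_nat_add_rpow c 2).2 (by norm_num)).congr fun n => ?_
    rw [abs_of_pos (by positivity), one_div]; norm_num
  · refine ((Real.summable_one_div_nat_add_rpow c 3).2 (by norm_num)).congr fun n => ?_
    rw [abs_of_pos (by positivity), one_div]; norm_num

lemma T7_bound {x : ℝ} (hx0 : 0 < x) (hx1 : x < 1) {s : ℝ} (hs1 : 1 ≤ s) (hs2 : s ≤ 2) (n : ℕ) :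
    ‖(1 / ((n:ℂ) + x) ^ (s:ℂ) - 1 / ((n:ℂ) + 1 - x) ^ (s:ℂ)) / 2‖ ≤
      2 * ((((n:ℝ) + min x (1 - x)) ^ 2)⁻¹ + (((n:ℝ) + min x (1 - x)) ^ 3)⁻¹) := by
  have hn : (0:ℝ) ≤ n := n.cast_nonneg
  have e1 : (1 / ((n:ℂ) + x) ^ (s:ℂ) - 1 / ((n:ℂ) + 1 - x) ^ (s:ℂ)) / 2 =
      ((((((n:ℝ) + x) ^ s)⁻¹ - (((n:ℝ) + 1 - x) ^ s)⁻¹) / 2 : ℝ) : ℂ) := by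
    push_cast
    rw [Complex.ofReal_cpow (by linarith), Complex.ofReal_cpow (by linarith)]
    push_cast
    simp [one_div]
  rw [e1, Complex.norm_real, Real.norm_eq_abs, abs_div, abs_two]
  have := T7_aux (a := n + x) (b := n + 1 - x) (s := s) (m := n + min x (1 - x))
    (by have := lt_min hx0 (sub_pos.2 hx1); linarith)
    (by have := min_le_left x (1 - x); linarith)
    (by have := min_le_right x (1 - x); linarith)
    (by rw [abs_le]; constructor <;> linarith) hs1 hs2
  have h0 := abs_nonneg ((((n:ℝ) + x) ^ s)⁻¹ - (((n:ℝ) + 1 - x) ^ s)⁻¹)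
  linarith

lemma T7_mem {x : ℝ} (hx0 : 0 < x) (hx1 : x < 1) : (x:ℂ) ∈ Complex.integerComplement := by
  rw [Complex.mem_integerComplement_iff]
  rintro ⟨n, hn⟩
  have hn : (n:ℝ) = x := by exact_mod_cast hn
  rw [← hn] at hx0 hx1
  have h1 : 0 < n := by exact_mod_cast hx0
  have h2 : n < 1 := by exact_mod_cast hx1
  omega

lemma T7_cot {x : ℝ} (hx0 : 0 < x) (hx1 : x < 1) :
    HurwitzZeta.hurwitzZetaOdd (x : UnitAddCircle) 1 = Real.pi / 2 * Complex.cot (Real.pi * x) := by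
  have hc : 0 < min x (1 - x) := lt_min hx0 (sub_pos.2 hx1)
  -- limit of the Dirichlet series
  have hlim : Tendsto (fun s : ℝ => ∑' n : ℕ,
      (1 / ((n:ℂ) + x) ^ (s:ℂ) - 1 / ((n:ℂ) + 1 - x) ^ (s:ℂ)) / 2) (𝓝[>] 1)
      (𝓝 (∑' n : ℕ, (1 / ((n:ℂ) + x) ^ ((1:ℝ):ℂ) - 1 / ((n:ℂ) + 1 - x) ^ ((1:ℝ):ℂ)) / 2)) := by
    refine tendsto_tsum_of_dominated_convergence (T7_summable hc) ?_ ?_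
    · intro n
      have hn : (0:ℝ) ≤ n := n.cast_nonneg
      have h1 : ((n:ℂ) + x) ≠ 0 := by
        have : (n:ℝ) + x ≠ 0 := by positivity
        exact_mod_cast this
      have h2 : ((n:ℂ) + 1 - x) ≠ 0 := by
        have : (n:ℝ) + 1 - x ≠ 0 := by linarith
        exact_mod_cast this
      refine Tendsto.mono_left ?_ nhdsWithin_le_nhds
      have key : ∀ z : ℂ, z ≠ 0 → Continuous fun s : ℝ => 1 / z ^ (s:ℂ) := by
        intro z hz
        refine continuous_const.div ?_ ?_
        · exact (Complex.continuous_ofReal).const_cpow (Or.inl hz)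
        · intro s; simp [Complex.cpow_eq_zero_iff, hz]
      exact (((key _ h1).sub (key _ h2)).div_const 2).tendsto 1
    · have : Set.Ioo (1:ℝ) 2 ∈ 𝓝[>] (1:ℝ) := Ioo_mem_nhdsGT (by norm_num)
      filter_upwards [this] with s hs n
      exact T7_bound hx0 hx1 hs.1.le hs.2.le n
  have hlim2 : Tendsto (fun s : ℝ => HurwitzZeta.hurwitzZetaOdd (x : UnitAddCircle) (s:ℂ)) (𝓝[>] 1)
      (𝓝 (HurwitzZeta.hurwitzZetaOdd (x : UnitAddCircle) 1)) := by
    refine Tendsto.mono_left ?_ nhdsWithin_le_nhds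
    have := ((HurwitzZeta.differentiable_hurwitzZetaOdd (x : UnitAddCircle)).continuous.comp
      Complex.continuous_ofReal).tendsto 1
    simpa [Function.comp_def] using this
  have hEq : HurwitzZeta.hurwitzZetaOdd (x : UnitAddCircle) 1 =
      ∑' n : ℕ, (1 / ((n:ℂ) + x) ^ ((1:ℝ):ℂ) - 1 / ((n:ℂ) + 1 - x) ^ ((1:ℝ):ℂ)) / 2 := by
    refine tendsto_nhds_unique hlim2 (hlim.congr' ?_)
    filter_upwards [self_mem_nhdsWithin] with s hs
    exact (HurwitzZeta.hasSum_nat_hurwitzZetaOdd_of_mem_Icc (a := x) ⟨hx0.le, hx1.le⟩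
      (s := (s:ℂ)) (by simpa using hs)).tsum_eq
  have hsum : Summable fun n : ℕ =>
      (1 / ((n:ℂ) + x) ^ ((1:ℝ):ℂ) - 1 / ((n:ℂ) + 1 - x) ^ ((1:ℝ):ℂ)) / 2 :=
    Summable.of_norm_bounded (T7_summable hc)
      (fun n => T7_bound hx0 hx1 le_rfl (by norm_num) n)
  rw [hEq]
  refine tendsto_nhds_unique hsum.hasSum.tendsto_sum_nat ?_
  have hpart : ∀ M : ℕ, ∑ n ∈ Finset.range M,
      (1 / ((n:ℂ) + x) ^ ((1:ℝ):ℂ) - 1 / ((n:ℂ) + 1 - x) ^ ((1:ℝ):ℂ)) / 2 =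
      (1 / (x:ℂ) + ∑ j ∈ Finset.range M, cotTerm x j - 1 / ((M:ℂ) + x)) / 2 := by
    intro M
    induction M with
    | zero => simp
    | succ M ih =>
      rw [Finset.sum_range_succ, ih, Finset.sum_range_succ, cotTerm]
      have : (1:ℂ) / (x - (M + 1)) = - (1 / ((M:ℂ) + 1 - x)) := by
        rw [← one_div_neg_eq_neg_one_div]; congr 1; ring
      rw [this]
      push_cast
      simp only [Complex.cpow_one]
      rw [show (M:ℂ) + 1 + x = x + (M + 1) by ring]
      ring
  simp_rw [hpart]
  have h1 := tendsto_logDeriv_euler_cot_sub (T7_mem hx0 hx1)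
  have h2 : Tendsto (fun M : ℕ => 1 / ((M:ℂ) + x)) atTop (𝓝 0) := by
    have : Tendsto (fun M : ℕ => 1 / ((M:ℝ) + x)) atTop (𝓝 0) := by
      simp_rw [one_div]
      exact (tendsto_atTop_add_const_right _ x tendsto_natCast_atTop_atTop).inv_tendsto_atTop
    have := (Complex.continuous_ofReal.tendsto 0).comp this
    simpa [Function.comp_def] using this
  have h3 := (((tendsto_const_nhds (x := 1 / (x:ℂ))).add h1).sub h2).div_const 2
  have e : (1 / (x:ℂ) + (Real.pi * Complex.cot (Real.pi * x) - 1 / x) - 0) / 2 =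
      Real.pi / 2 * Complex.cot (Real.pi * x) := by ring
  rwa [e] at h3

/-- The finite Fourier transform of the sawtooth. -/
noncomputable def T7_S (N : ℕ) [NeZero N] (k : ZMod N) : ℂ :=
  ∑ j : ZMod N, (j.val : ℂ) * ZMod.stdAddChar (j * k)

lemma T7_geom (w : ℂ) (M : ℕ) : (w - 1) * ∑ j ∈ Finset.range M, (j:ℂ) * w ^ j =
    M * w ^ M - w * ∑ j ∈ Finset.range M, w ^ j := by
  induction M with
  | zero => simp
  | succ M ih =>
    rw [Finset.sum_range_succ, mul_add, ih, Finset.sum_range_succ]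
    push_cast
    ring

lemma T7_sum_range (N : ℕ) [NeZero N] (f : ℕ → ℂ) :
    ∑ j : ZMod N, f j.val = ∑ j ∈ Finset.range N, f j := by
  refine Finset.sum_bij (fun j _ => j.val) ?_ ?_ ?_ ?_
  · intro j _; exact Finset.mem_range.2 j.val_lt
  · intro a _ b _ h; exact ZMod.val_injective N h
  · intro b hb; exact ⟨(b : ZMod N), Finset.mem_univ _, ZMod.val_cast_of_lt (Finset.mem_range.1 hb)⟩
  · intro j _; rfl

lemma T7_S_eq (N : ℕ) [NeZero N] (k : ZMod N) (hk : k ≠ 0) :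
    Complex.cot (Real.pi * ((k.val : ℝ) / N : ℝ)) = Complex.I * (1 + 2 / N * T7_S N k) := by
  set w : ℂ := ZMod.stdAddChar k with hw
  have hN : (N:ℂ) ≠ 0 := NeZero.ne _
  have hw1 : w ≠ 1 := by
    intro h
    apply hk
    apply ZMod.injective_stdAddChar (N := N)
    rw [← hw, h, AddChar.map_zero_eq_one]
  have hpow : ∀ n : ℕ, ZMod.stdAddChar ((n : ZMod N) * k) = w ^ n := by
    intro n
    rw [← nsmul_eq_mul, AddChar.map_nsmul_eq_pow]
  have hwN : w ^ N = 1 := by rw [← hpow]; simp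
  have hS : T7_S N k = ∑ j ∈ Finset.range N, (j:ℂ) * w ^ j := by
    rw [← T7_sum_range N (fun j => (j:ℂ) * w ^ j), T7_S]
    refine Finset.sum_congr rfl fun j _ => ?_
    rw [← hpow, ZMod.natCast_zmod_val]
  have hg0 : ∑ j ∈ Finset.range N, w ^ j = 0 := by
    have := geom_sum_mul w N
    rw [hwN, sub_self] at this
    exact (mul_eq_zero.1 this).resolve_right (sub_ne_zero.2 hw1)
  have h1 : (w - 1) * T7_S N k = N := by
    rw [hS, T7_geom, hg0, hwN]; ring
  have hexp : Complex.exp (2 * Complex.I * (Real.pi * ((k.val : ℝ) / N : ℝ))) = w := by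
    have := ZMod.stdAddChar_coe (N := N) (k.val : ℤ)
    rw [hw]
    conv_rhs => rw [← ZMod.natCast_zmod_val k]
    rw [Int.cast_natCast] at this
    rw [this]
    congr 1
    push_cast
    ring
  have hw2 : w - 1 ≠ 0 := sub_ne_zero.2 hw1
  have hw3 : 1 - w ≠ 0 := sub_ne_zero.2 hw1.symm
  have h2 : T7_S N k = N / (w - 1) := by rw [eq_div_iff hw2, mul_comm]; exact h1
  rw [Complex.cot_eq_exp_ratio, hexp, h2]
  have hI := Complex.I_ne_zero
  field_simp
  rw [Complex.I_sq]
  ring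

lemma T7_ne_zero (N : ℕ) [NeZero N] (χ : DirichletCharacter ℂ N) (hχ : χ.Odd) :
    ∑ k : ZMod N, χ k * T7_S N k ≠ 0 := by
  have hodd : Function.Odd (χ : ZMod N → ℂ) := hχ.to_fun
  have h0 : χ 0 = 0 := hodd.map_zero
  have hne : χ ≠ 1 := by
    rintro rfl
    have : (1 : DirichletCharacter ℂ N) (-1) = 1 := MulChar.one_apply (isUnit_one.neg)
    have h' : (1 : DirichletCharacter ℂ N) (-1) = -1 := hχ
    rw [this] at h'
    norm_num at h'
  have hL := DirichletCharacter.LFunction_apply_one_ne_zero hne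
  intro hz
  apply hL
  rw [DirichletCharacter.LFunction, ZMod.LFunction_def_odd hodd]
  have hterm : ∀ k : ZMod N, χ k * HurwitzZeta.hurwitzZetaOdd (ZMod.toAddCircle k) 1 =
      Real.pi / 2 * Complex.I * χ k + Real.pi / N * Complex.I * (χ k * T7_S N k) := by
    intro k
    by_cases hk : k = 0
    · simp [hk, h0]
    · have hN : (0:ℝ) < N := by exact_mod_cast NeZero.pos N
      have hv : 0 < k.val := Nat.pos_of_ne_zero ((ZMod.val_ne_zero k).2 hk)
      rw [ZMod.toAddCircle_apply, T7_cot (by positivity)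
        (by rw [div_lt_one hN]; exact_mod_cast k.val_lt), T7_S_eq N k hk]
      ring
  simp_rw [hterm]
  rw [Finset.sum_add_distrib, ← Finset.mul_sum, ← Finset.mul_sum, hz, hodd.sum_eq_zero]
  simp

lemma T7_shift (N : ℕ) [NeZero N] (u : (ZMod N)ˣ) (χ : DirichletCharacter ℂ N) :
    χ u * ∑ k : ZMod N, χ k * T7_S N k =
      ∑ k : ZMod N, χ k * ∑ j : ZMod N, (((u:ZMod N) * j).val : ℂ) * ZMod.stdAddChar (j * k) := by
  rw [Finset.mul_sum]
  refine Fintype.sum_equiv u.mulLeft _ _ fun k => ?_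
  rw [Units.mulLeft_apply, map_mul, ← mul_assoc, T7_S]
  congr 1
  symm
  refine Fintype.sum_equiv u.mulLeft _ _ fun j => ?_
  rw [Units.mulLeft_apply]
  congr 2
  ring

lemma T7_char_sum (N : ℕ) [NeZero N] (u : Fin 6 → (ZMod N)ˣ)
    (h : ∀ j : ZMod N, j ≠ 0 → ∑ i, ((u i : ZMod N) * j).val = 3 * N)
    (χ : DirichletCharacter ℂ N) (hχ : χ.Odd) : ∑ i, χ (u i) = 0 := by
  have hodd : Function.Odd (χ : ZMod N → ℂ) := hχ.to_fun
  have h0 : χ 0 = 0 := hodd.map_zero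
  refine (mul_eq_zero.1 (?_ : (∑ i, χ (u i)) * ∑ k : ZMod N, χ k * T7_S N k = 0)).resolve_right
    (T7_ne_zero N χ hχ)
  rw [Finset.sum_mul]
  simp_rw [T7_shift]
  rw [Finset.sum_comm]
  simp_rw [← Finset.mul_sum]
  have hk : ∀ k : ZMod N, χ k * ∑ i, ∑ j : ZMod N,
      (((u i:ZMod N) * j).val : ℂ) * ZMod.stdAddChar (j * k) = χ k * (-(3 * N)) := by
    intro k
    by_cases hk : k = 0
    · simp [hk, h0]
    congr 1
    rw [Finset.sum_comm]
    have hj : ∀ j : ZMod N, ∑ i, (((u i:ZMod N) * j).val : ℂ) * ZMod.stdAddChar (j * k) =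
        3 * N * ZMod.stdAddChar (j * k) - if j = 0 then 3 * (N:ℂ) else 0 := by
      intro j
      rw [← Finset.sum_mul]
      by_cases hj : j = 0
      · simp [hj]
      · have := h j hj
        rw [if_neg hj, sub_zero]
        congr 1
        exact_mod_cast this
    simp_rw [hj]
    rw [Finset.sum_sub_distrib, ← Finset.mul_sum,
      AddChar.sum_mulShift k (ZMod.isPrimitive_stdAddChar N)]
    simp [hk]
  simp_rw [hk]
  rw [← Finset.sum_mul, hodd.sum_eq_zero, zero_mul]

lemma T7_balanced (N : ℕ) [NeZero N] (u : Fin 6 → (ZMod N)ˣ)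
    (h : ∀ j : ZMod N, j ≠ 0 → ∑ i, ((u i : ZMod N) * j).val = 3 * N) (b : (ZMod N)ˣ) :
    ∑ i, ((if b = u i then (1:ℤ) else 0) - if b = - u i then 1 else 0) = 0 := by
  have h1 : ∀ χ : DirichletCharacter ℂ N,
      ∑ i, (χ (b:ZMod N)⁻¹ * χ (u i) - χ (b:ZMod N)⁻¹ * χ (-(u i : ZMod N))) = 0 := by
    intro χ
    rcases χ.even_or_odd with hχ | hχ
    · simp [hχ.to_fun _]
    · have := T7_char_sum N u h χ hχ
      simp only [hχ.to_fun _]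
      rw [Finset.sum_sub_distrib, ← Finset.mul_sum, ← Finset.mul_sum, Finset.sum_neg_distrib, this]
      simp
  have h2 : ∑ χ : DirichletCharacter ℂ N,
      ∑ i, (χ (b:ZMod N)⁻¹ * χ (u i) - χ (b:ZMod N)⁻¹ * χ (-(u i : ZMod N))) = 0 :=
    Finset.sum_eq_zero fun χ _ => h1 χ
  rw [Finset.sum_comm] at h2
  simp_rw [Finset.sum_sub_distrib, DirichletCharacter.sum_char_inv_mul_char_eq ℂ b.isUnit,
    ← Units.val_neg, Units.val_inj] at h2
  have h3 : (N.totient : ℂ) * ((∑ i, ((if b = u i then (1:ℤ) else 0) -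
      if b = - u i then 1 else 0) : ℤ) : ℂ) = 0 := by
    rw [← h2]
    push_cast
    rw [Finset.mul_sum, ← Finset.sum_sub_distrib]
    refine Finset.sum_congr rfl fun i _ => ?_
    split_ifs <;> simp
  have h4 : (N.totient : ℂ) ≠ 0 := by
    exact_mod_cast (Nat.totient_pos.2 (NeZero.pos N)).ne'
  exact_mod_cast (mul_eq_zero.1 h3).resolve_left h4

/-- removing a cancelling pair from a balanced family -/
lemma T7_remove {G : Type*} [InvolutiveNeg G] [DecidableEq G] (hG : ∀ x : G, x ≠ -x)
    (u : Fin 6 → G) (s : Finset (Fin 6)) (hs : s.Nonempty)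
    (h : ∀ b : G, ∑ i ∈ s, ((if b = u i then (1:ℤ) else 0) - if b = - u i then 1 else 0) = 0) :
    ∃ i ∈ s, ∃ j ∈ s, i ≠ j ∧ u j = - u i ∧
      ∀ b : G, ∑ i ∈ (s.erase i).erase j,
        ((if b = u i then (1:ℤ) else 0) - if b = - u i then 1 else 0) = 0 := by
  obtain ⟨i, hi⟩ := hs
  have hex : ∃ j ∈ s, u j = - u i := by
    by_contra! hcon
    have h1 := h (u i)
    have h2 : ∀ j ∈ s, (0:ℤ) ≤ ((if u i = u j then (1:ℤ) else 0) - if u i = - u j then 1 else 0) := by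
      intro j hj
      have : u i ≠ - u j := fun e => hcon j hj (by rw [e, neg_neg])
      rw [if_neg this]
      split_ifs <;> simp
    have h3 := (Finset.sum_eq_zero_iff_of_nonneg h2).1 h1 i hi
    rw [if_pos rfl, if_neg (hG _)] at h3
    norm_num at h3
  obtain ⟨j, hj, hji⟩ := hex
  have hij : i ≠ j := by
    rintro rfl
    exact hG _ hji
  refine ⟨i, hi, j, hj, hij, hji, fun b => ?_⟩
  have h1 := h b
  rw [← Finset.add_sum_erase s _ hi,
    ← Finset.add_sum_erase (s.erase i) _ (Finset.mem_erase.2 ⟨hij.symm, hj⟩), hji, neg_neg] at h1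
  linarith

lemma T7_pairs {G : Type*} [InvolutiveNeg G] [DecidableEq G] (hG : ∀ x : G, x ≠ -x)
    (u : Fin 6 → G)
    (h : ∀ b : G, ∑ i, ((if b = u i then (1:ℤ) else 0) - if b = - u i then 1 else 0) = 0) :
    ∃ σ : Equiv.Perm (Fin 6), u (σ 1) = - u (σ 0) ∧ u (σ 3) = - u (σ 2) ∧ u (σ 5) = - u (σ 4) := by
  obtain ⟨i₀, m0, i₁, m1, n01, e1, h1⟩ := T7_remove hG u Finset.univ Finset.univ_nonempty h
  have c1 : ((Finset.univ.erase i₀).erase i₁).card = 4 := by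
    rw [Finset.card_erase_of_mem (by simp [n01.symm]), Finset.card_erase_of_mem m0]; simp
  obtain ⟨i₂, m2, i₃, m3, n23, e2, h2⟩ := T7_remove hG u _ (Finset.card_pos.1 (by omega)) h1
  have c2 : ((((Finset.univ.erase i₀).erase i₁).erase i₂).erase i₃).card = 2 := by
    rw [Finset.card_erase_of_mem (Finset.mem_erase.2 ⟨n23.symm, m3⟩),
      Finset.card_erase_of_mem m2, c1]
  obtain ⟨i₄, m4, i₅, m5, n45, e3, h3⟩ := T7_remove hG u _ (Finset.card_pos.1 (by omega)) h2
  simp only [Finset.mem_erase, Finset.mem_univ, and_true] at m2 m3 m4 m5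
  have hinj : Function.Injective ![i₀, i₁, i₂, i₃, i₄, i₅] := by
    intro a b hab
    fin_cases a <;> fin_cases b <;> simp at hab ⊢ <;> grind
  exact ⟨Equiv.ofBijective _ (Finite.injective_iff_bijective.1 hinj), e1, e2, e3⟩

lemma T7_fract (r : ℕ) [NeZero r] (j : ZMod r) (a : ℤ) :
    Int.fract (((j.val : ℕ) : ℚ) * (a : ℚ) / (r : ℚ)) = (((a : ZMod r) * j).val : ℚ) / r := by
  have hr : (0:ℚ) < r := by exact_mod_cast NeZero.pos r
  rw [Int.fract_eq_iff]
  refine ⟨by positivity, ?_, ?_⟩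
  · rw [div_lt_one hr]; exact_mod_cast ZMod.val_lt _
  · have h1 : ((((a : ZMod r) * j).val : ℤ)) = ((j.val : ℤ) * a) % r := by
      rw [← ZMod.val_intCast]
      congr 2
      push_cast
      rw [ZMod.natCast_zmod_val, mul_comm]
    refine ⟨((j.val : ℤ) * a) / r, ?_⟩
    have h2 := Int.emod_add_mul_ediv ((j.val : ℤ) * a) r
    rw [← h1] at h2
    have h3 : ((((a : ZMod r) * j).val : ℚ)) + r * ((((j.val : ℤ) * a) / r : ℤ) : ℚ)
        = (j.val : ℚ) * a := by exact_mod_cast h2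
    rw [← sub_div, div_eq_iff hr.ne', ← h3]
    ring

/-- Terminal lemma, case gcd(e,r) = 1: setting a₅ = -e, a₆ = -1, the six numbers
can be partitioned into three pairs each summing to 0 mod r. -/
theorem stmt_7 (r : ℕ) (hr : 0 < r) (a₁ a₂ a₃ a₄ e : ℤ)
    (h₁ : Int.gcd a₁ r = 1) (h₂ : Int.gcd a₂ r = 1) (h₃ : Int.gcd a₃ r = 1)
    (h₄ : Int.gcd a₄ r = 1) (he : Int.gcd e r = 1)
    (hsum : ∀ j : ℕ, 1 ≤ j → j ≤ r - 1 →
      Int.fract ((j : ℚ) * (a₁ : ℚ) / (r : ℚ)) + Int.fract ((j : ℚ) * (a₂ : ℚ) / (r : ℚ)) +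
      Int.fract ((j : ℚ) * (a₃ : ℚ) / (r : ℚ)) + Int.fract ((j : ℚ) * (a₄ : ℚ) / (r : ℚ)) =
      Int.fract ((j : ℚ) * (e : ℚ) / (r : ℚ)) + (j : ℚ) / (r : ℚ) + 1) :
    ∃ σ : Equiv.Perm (Fin 6),
      (![a₁, a₂, a₃, a₄, -e, -1] (σ 0) + ![a₁, a₂, a₃, a₄, -e, -1] (σ 1)) ≡ 0 [ZMOD (r : ℤ)] ∧
      (![a₁, a₂, a₃, a₄, -e, -1] (σ 2) + ![a₁, a₂, a₃, a₄, -e, -1] (σ 3)) ≡ 0 [ZMOD (r : ℤ)] ∧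
      (![a₁, a₂, a₃, a₄, -e, -1] (σ 4) + ![a₁, a₂, a₃, a₄, -e, -1] (σ 5)) ≡ 0 [ZMOD (r : ℤ)] := by
  have : NeZero r := ⟨hr.ne'⟩
  set A : Fin 6 → ℤ := ![a₁, a₂, a₃, a₄, -e, -1] with hA
  have hcop : ∀ i, IsUnit ((A i : ℤ) : ZMod r) := by
    have key : ∀ a : ℤ, Int.gcd a r = 1 → IsUnit ((a : ℤ) : ZMod r) := by
      intro a ha
      rw [ZMod.coe_int_isUnit_iff_isCoprime]
      exact IsCoprime.symm <| Int.isCoprime_iff_gcd_eq_one.2 ha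
    intro i
    fin_cases i
    · exact key _ h₁
    · exact key _ h₂
    · exact key _ h₃
    · exact key _ h₄
    · simpa [hA] using (key _ he)
    · simp [hA]
  set u : Fin 6 → (ZMod r)ˣ := fun i => (hcop i).unit with hu
  have huA : ∀ i, (u i : ZMod r) = (A i : ZMod r) := fun i => rfl
  have goal_of : ∀ i j, u j = - u i → A i + A j ≡ 0 [ZMOD (r : ℤ)] := by
    intro i j hij
    rw [← ZMod.intCast_eq_intCast_iff]
    push_cast
    rw [← huA, ← huA, hij]
    simp
  by_cases hG : ∀ x : (ZMod r)ˣ, x ≠ -x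
  · have hval : ∀ j : ZMod r, j ≠ 0 → ∑ i, ((u i : ZMod r) * j).val = 3 * r := by
      intro j hj
      have hv : 0 < j.val := Nat.pos_of_ne_zero ((ZMod.val_ne_zero j).2 hj)
      have hlt : j.val < r := j.val_lt
      have hs := hsum j.val hv (by omega)
      rw [T7_fract, T7_fract, T7_fract, T7_fract, T7_fract] at hs
      have hrq : (r:ℚ) ≠ 0 := by exact_mod_cast hr.ne'
      field_simp at hs
      have hs' : ((a₁ : ZMod r) * j).val + ((a₂ : ZMod r) * j).val + ((a₃ : ZMod r) * j).val +
          ((a₄ : ZMod r) * j).val = ((e : ZMod r) * j).val + j.val + r := by exact_mod_cast hs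
      have hej : (e : ZMod r) * j ≠ 0 := by
        intro h0
        have hue : IsUnit (e : ZMod r) := by
          rw [ZMod.coe_int_isUnit_iff_isCoprime]
          exact IsCoprime.symm <| Int.isCoprime_iff_gcd_eq_one.2 he
        exact hj ((hue.mul_right_eq_zero).1 h0)
      have hne : (((-e : ℤ) : ZMod r) * j).val = r - ((e : ZMod r) * j).val := by
        have : NeZero ((e : ZMod r) * j) := ⟨hej⟩
        rw [Int.cast_neg, neg_mul, ZMod.val_neg_of_ne_zero]
      have hn1 : (((-1 : ℤ) : ZMod r) * j).val = r - j.val := by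
        have : NeZero j := ⟨hj⟩
        rw [Int.cast_neg, Int.cast_one, neg_one_mul, ZMod.val_neg_of_ne_zero]
      have helt := ZMod.val_lt ((e : ZMod r) * j)
      simp only [Fin.sum_univ_six, huA]
      change ((a₁ : ZMod r) * j).val + ((a₂ : ZMod r) * j).val + ((a₃ : ZMod r) * j).val +
          ((a₄ : ZMod r) * j).val + (((-e : ℤ) : ZMod r) * j).val +
          (((-1 : ℤ) : ZMod r) * j).val = 3 * r
      rw [hne, hn1]
      omega
    obtain ⟨σ, e1, e2, e3⟩ := T7_pairs hG u (T7_balanced r u hval)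
    exact ⟨σ, goal_of _ _ e1, goal_of _ _ e2, goal_of _ _ e3⟩
  · push Not at hG
    obtain ⟨x, hx⟩ := hG
    have hxx : (x : ZMod r) + x = 0 := by
      have := congrArg Units.val hx
      rw [Units.val_neg] at this
      nth_rewrite 1 [this]
      simp
    have h2 : (2 : ZMod r) = 0 := by
      rw [← two_mul] at hxx
      exact (x.isUnit.mul_left_eq_zero).1 hxx
    have hr2 : r ∣ 2 := (ZMod.natCast_eq_zero_iff 2 r).1 (by exact_mod_cast h2)
    have hall : ∀ v w : (ZMod r)ˣ, v = -w := by
      have : r = 1 ∨ r = 2 := (Nat.dvd_prime Nat.prime_two).1 hr2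
      clear_value u A
      clear * - this
      intro v w
      ext
      rw [Units.val_neg]
      have hv := v.mul_inv
      have hw := w.mul_inv
      revert hv hw
      generalize (v : ZMod r) = a
      generalize ((v⁻¹ : (ZMod r)ˣ) : ZMod r) = b
      generalize (w : ZMod r) = c
      generalize ((w⁻¹ : (ZMod r)ˣ) : ZMod r) = d
      clear v w
      revert a b c d
      rcases this with rfl | rfl
      · intro a b c d _ _
        exact Subsingleton.elim _ _
      · decide
    exact ⟨1, goal_of _ _ (hall _ _), goal_of _ _ (hall _ _), goal_of _ _ (hall _ _)⟩
end
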